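/- arXiv:1203.3173 — 4 statements merged into one kernel-verified Lean document; each statement's English description precedes it below -/
import Mathlib

section
/- Contractivity of the quadratic example: let f : S^d → ℝ^d be continuous and define h : ℝ^d × S^d × I_d → ℝ by h(u,θ,i) := f^i(θ) − (1/2) Σ_{j=1}^d (max(u^i − u^j, 0))². Then h is contractive: there exists M > 0 such that for every θ ∈ S^d, every i ∈ I_d and every u ∈ ℝ^d with ‖u‖_♯ > M: if u^j ≤ u^i for all j then h(u,θ,i) < (1/d) Σ_{j=1}^d h(u,θ,j), and if u^j ≥ u^i for all j then h(u,θ,i) > (1/d) Σ_{j=1}^d h(u,θ,j). -/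
open scoped BigOperators

/-- Euclidean norm on `Fin d → ℝ`. -/
noncomputable def enorm' {d : ℕ} (v : Fin d → ℝ) : ℝ := Real.sqrt (∑ j, v j ^ 2)

/-- The probability simplex `S^d`. -/
def simplex (d : ℕ) : Set (Fin d → ℝ) := {θ | (∀ i, 0 ≤ θ i) ∧ ∑ i, θ i = 1}

/-- The semi-norm `‖v‖_♯ = inf_λ ‖v + λ 𝟙‖`. -/
noncomputable def sharp {d : ℕ} (v : Fin d → ℝ) : ℝ :=
  ⨅ l : ℝ, enorm' (fun j => v j + l)

/-! The value `h(u, θ, i)` lies below the average of `h(u, θ, ·)` exactly when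
`∑ j, (h(u, θ, j) - h(u, θ, i))` is positive. In this sum `f` contributes at least `-d C`, where `C`
bounds the oscillation of `f(θ)`. If `u i` is maximal, the quadratic parts contribute only
nonnegative terms, and the term of a coordinate `j` where `u j` is minimal is `½ ∑ k, (u i - u k)²`.
This is at least `½ ‖u‖_♯²`, by the choice `λ = -u i` in the infimum, so it exceeds `d C` as soon as
`‖u‖_♯` is large. The case where `u i` is minimal is symmetric, with `j` a coordinate where `u j` is
maximal. -/

section Sum

variable {ι R : Type*} [Fintype ι]

theorem sum_add_pos_of_card_mul_lt [CommRing R] [LinearOrder R] [IsStrictOrderedRing R]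
    {e b : ι → R} {C : R} {m : ι} (he : ∀ j, -C ≤ e j) (hb : ∀ j, 0 ≤ b j)
    (hm : Fintype.card ι * C < b m) : 0 < ∑ j, (e j + b j) := by
  have he_sum : -(Fintype.card ι * C) ≤ ∑ j, e j := by
    simpa using Finset.card_nsmul_le_sum Finset.univ e (-C) fun j _ => he j
  have hb_sum : b m ≤ ∑ j, b j :=
    Finset.single_le_sum (fun j _ => hb j) (Finset.mem_univ m)
  rw [Finset.sum_add_distrib]
  linarith

variable [Field R] [LinearOrder R] [IsStrictOrderedRing R] [Nonempty ι] {x : ι → R} {c : R}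

theorem lt_mean_iff_sum_sub_pos :
    c < 1 / (Fintype.card ι : R) * ∑ j, x j ↔ 0 < ∑ j, (x j - c) := by
  have hcard : (0 : R) < Fintype.card ι := Nat.cast_pos.2 Fintype.card_pos
  rw [one_div_mul_eq_div, lt_div_iff₀' hcard, Finset.sum_sub_distrib, sub_pos, Finset.sum_const,
    Finset.card_univ, nsmul_eq_mul]

theorem mean_lt_iff_sum_sub_pos :
    1 / (Fintype.card ι : R) * ∑ j, x j < c ↔ 0 < ∑ j, (c - x j) := by
  have hcard : (0 : R) < Fintype.card ι := Nat.cast_pos.2 Fintype.card_pos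
  rw [one_div_mul_eq_div, div_lt_iff₀' hcard, Finset.sum_sub_distrib, sub_pos, Finset.sum_const,
    Finset.card_univ, nsmul_eq_mul]

end Sum

section SqExcess

variable {ι R : Type*} [Fintype ι] [CommRing R] [LinearOrder R]

/-- The total squared amount by which the coordinate `u i` exceeds the coordinates of `u`: the
penalty in the quadratic example, without its factor `1/2`. -/
def sqExcess (u : ι → R) (i : ι) : R :=
  ∑ j, (max (u i - u j) 0) ^ 2

variable [IsOrderedRing R] {u : ι → R} {i j : ι}

theorem sqExcess_eq_sum_sq_sub (hi : ∀ j, u j ≤ u i) : sqExcess u i = ∑ j, (u i - u j) ^ 2 :=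
  Finset.sum_congr rfl fun j _ => by rw [max_eq_left (sub_nonneg.2 (hi j))]

theorem sqExcess_eq_zero (hi : ∀ j, u i ≤ u j) : sqExcess u i = 0 :=
  Finset.sum_eq_zero fun j _ => by
    rw [max_eq_right (sub_nonpos.2 (hi j)), zero_pow two_ne_zero]

theorem sqExcess_le_sqExcess (hij : u i ≤ u j) : sqExcess u i ≤ sqExcess u j := by
  unfold sqExcess
  gcongr

end SqExcess

section QuadraticExample

variable {ι R : Type*} [Fintype ι] [Field R] [LinearOrder R]

/-- The quadratic example `h(u, θ, ·)` at a fixed parameter `θ`, as a function of the vector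
`a = f(θ)` and of `u`. -/
def quadraticExample (a u : ι → R) (i : ι) : R :=
  a i - (1 / 2) * sqExcess u i

variable [IsStrictOrderedRing R] {a u : ι → R} {i : ι} {C : R}

theorem quadraticExample_lt_mean (ha : ∀ j, a i - a j ≤ C) (hi : ∀ j, u j ≤ u i)
    (hu : 2 * (Fintype.card ι * C) < ∑ j, (u i - u j) ^ 2) :
    quadraticExample a u i < 1 / (Fintype.card ι : R) * ∑ j, quadraticExample a u j := by
  have : Nonempty ι := ⟨i⟩
  obtain ⟨m, hm⟩ := Finite.exists_min u
  have hpos : 0 < ∑ j, ((a j - a i) + (1 / 2) * (sqExcess u i - sqExcess u j)) := by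
    refine sum_add_pos_of_card_mul_lt (C := C) (m := m) (fun j => ?_) (fun j => ?_) ?_
    · linarith [ha j]
    · linarith [sqExcess_le_sqExcess (hi j)]
    · rw [sqExcess_eq_zero hm, sqExcess_eq_sum_sq_sub hi]
      linarith
  refine lt_mean_iff_sum_sub_pos.2 (hpos.trans_eq (Finset.sum_congr rfl fun j _ => ?_))
  unfold quadraticExample
  ring

theorem mean_lt_quadraticExample (ha : ∀ j, a j - a i ≤ C) (hi : ∀ j, u i ≤ u j)
    (hu : ∀ k, 2 * (Fintype.card ι * C) < ∑ j, (u k - u j) ^ 2) :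
    1 / (Fintype.card ι : R) * ∑ j, quadraticExample a u j < quadraticExample a u i := by
  have : Nonempty ι := ⟨i⟩
  obtain ⟨m, hm⟩ := Finite.exists_max u
  have hpos : 0 < ∑ j, ((a i - a j) + (1 / 2) * (sqExcess u j - sqExcess u i)) := by
    refine sum_add_pos_of_card_mul_lt (C := C) (m := m) (fun j => ?_) (fun j => ?_) ?_
    · linarith [ha j]
    · linarith [sqExcess_le_sqExcess (hi j)]
    · rw [sqExcess_eq_zero hi, sqExcess_eq_sum_sq_sub hm]
      linarith [hu m]
  refine mean_lt_iff_sum_sub_pos.2 (hpos.trans_eq (Finset.sum_congr rfl fun j _ => ?_))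
  unfold quadraticExample
  ring

end QuadraticExample

section Sharp

variable {d : ℕ} (u : Fin d → ℝ)

theorem sharp_nonneg : 0 ≤ sharp u :=
  Real.iInf_nonneg fun _ => Real.sqrt_nonneg _

theorem sharp_le_enorm'_add_const (l : ℝ) : sharp u ≤ enorm' fun j => u j + l :=
  ciInf_le ⟨0, Set.forall_mem_range.2 fun _ => Real.sqrt_nonneg _⟩ l

theorem sharp_sq_le_sum_sq_sub (i : Fin d) : sharp u ^ 2 ≤ ∑ j, (u i - u j) ^ 2 :=
  calc
    sharp u ^ 2 ≤ ∑ j, (u j + -u i) ^ 2 :=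
      (Real.le_sqrt (sharp_nonneg u) (by positivity)).1 (sharp_le_enorm'_add_const u (-u i))
    _ = ∑ j, (u i - u j) ^ 2 := Finset.sum_congr rfl fun j _ => by ring

end Sharp

theorem exists_forall_sub_le_of_isBounded_image {Θ ι : Type*} [Finite ι] {f : Θ → ι → ℝ}
    {K : Set Θ} (hf : Bornology.IsBounded (f '' K)) :
    ∃ C, ∀ θ ∈ K, ∀ i j, f θ i - f θ j ≤ C := by
  have := Fintype.ofFinite ι
  obtain ⟨C, hC⟩ := hf.exists_norm_le
  have hcoord : ∀ θ ∈ K, ∀ i, ‖f θ i‖ ≤ C := fun θ hθ i =>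
    (norm_le_pi_norm (f θ) i).trans (hC (f θ) (Set.mem_image_of_mem f hθ))
  refine ⟨C + C, fun θ hθ i j => ?_⟩
  calc
    f θ i - f θ j ≤ ‖f θ i - f θ j‖ := Real.le_norm_self _
    _ ≤ ‖f θ i‖ + ‖f θ j‖ := norm_sub_le _ _
    _ ≤ C + C := add_le_add (hcoord θ hθ i) (hcoord θ hθ j)

/-- Contractivity of `h`, uniformly over parameters `θ` in `K`: once `‖u‖_♯` is large, `h u θ i` is
below the average of `h u θ` if `u i` is maximal, and above it if `u i` is minimal. The parameter
set is arbitrary; in the paper it is the simplex. -/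
def IsContractiveOn {Θ : Type*} {d : ℕ} (h : (Fin d → ℝ) → Θ → Fin d → ℝ) (K : Set Θ) : Prop :=
  ∃ M : ℝ, 0 < M ∧ ∀ θ ∈ K, ∀ i : Fin d, ∀ u : Fin d → ℝ, M < sharp u →
    ((∀ j, u j ≤ u i) → h u θ i < (1 / (d : ℝ)) * ∑ j, h u θ j) ∧
    ((∀ j, u i ≤ u j) → (1 / (d : ℝ)) * ∑ j, h u θ j < h u θ i)

theorem statement9_general {Θ : Type*} {d : ℕ} {f : Θ → Fin d → ℝ} {K : Set Θ}
    (hf : ∃ C, ∀ θ ∈ K, ∀ i j, f θ i - f θ j ≤ C) :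
    IsContractiveOn (fun u θ => quadraticExample (f θ) u) K := by
  obtain ⟨C, hC⟩ := hf
  refine ⟨√(2 * (d * C)) + 1, by positivity, fun θ hθ i u hu => ?_⟩
  have hspread : ∀ k, 2 * (d * C) < ∑ j, (u k - u j) ^ 2 := fun k =>
    (Real.lt_sq_of_sqrt_lt ((lt_add_one _).trans hu)).trans_le (sharp_sq_le_sum_sq_sub u k)
  constructor
  · intro hi
    simpa only [Fintype.card_fin] using
      quadraticExample_lt_mean (fun j => hC θ hθ i j) hi (by simpa using hspread i)
  · intro hi
    simpa only [Fintype.card_fin] using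
      mean_lt_quadraticExample (fun j => hC θ hθ j i) hi (by simpa using hspread)

/-- contractivity of the quadratic example. For continuous `f : S^d → ℝ^d`
and `h(u,θ,i) := f^i(θ) - (1/2) Σ_j (max(u^i - u^j,0))²`, there is `M > 0` such that for
all `θ ∈ S^d`, `i` and `u` with `‖u‖_♯ > M`: if `u^j ≤ u^i` for all `j` then
`h(u,θ,i) < (1/d) Σ_j h(u,θ,j)`, and if `u^j ≥ u^i` for all `j` then
`h(u,θ,i) > (1/d) Σ_j h(u,θ,j)`. -/
theorem statement9 {d : ℕ} (hd : 1 ≤ d) (f : (Fin d → ℝ) → Fin d → ℝ)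
    (hf : ContinuousOn f (simplex d)) :
    ∃ M : ℝ, 0 < M ∧ ∀ θ ∈ simplex d, ∀ i : Fin d, ∀ u : Fin d → ℝ, M < sharp u →
      ((∀ j, u j ≤ u i) →
        f θ i - (1/2) * ∑ j, (max (u i - u j) 0) ^ 2
          < (1/(d:ℝ)) * ∑ j, (f θ j - (1/2) * ∑ k, (max (u j - u k) 0) ^ 2)) ∧
      ((∀ j, u i ≤ u j) →
        (1/(d:ℝ)) * ∑ j, (f θ j - (1/2) * ∑ k, (max (u j - u k) 0) ^ 2)
          < f θ i - (1/2) * ∑ j, (max (u i - u j) 0) ^ 2) :=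
  statement9_general <| exists_forall_sub_le_of_isBounded_image
    ((isCompact_stdSimplex ℝ (Fin d)).image_of_continuousOn hf).isBounded
end

section
/- Contraction property of linear cooperative ODE systems: let z : [0,T] → ℝ^Λ be a C¹ solution of −dz_m/dt = Σ_{m'∈Λ} a_{mm'}(t)·(z_{m'}(t) − z_m(t)) for every m ∈ Λ and t ∈ [0,T]. Then for every t ∈ [0,T]: max_{m∈Λ} |z_m(t)| ≤ max_{m∈Λ} |z_m(T)|; moreover, if z_m(T) ≤ 0 for every m ∈ Λ, then z_m(t) ≤ 0 for every m ∈ Λ and every t ∈ [0,T]. -/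
open scoped BigOperators

/-!
Among all components and all times, take a point where `z_m(t) + ε (t - T)` is largest. If it occurs
at a time `t < T`, then `z_m` is the largest component at time `t`, so the equation gives
`dz_m/dt ≥ 0` and the perturbed component strictly increases to the right of `t`: a contradiction.
Hence the maximum is attained at `T`, and `ε → 0` gives `z_m(t) ≤ max z(T)`. The system is linear,
so `-z` satisfies it too, which yields the lower bound.
-/

open Set Filter Topology

theorem nonpos_of_hasDerivWithinAt_Ici_of_isLocalMaxOn {f : ℝ → ℝ} {f' t : ℝ}
    (hf : HasDerivWithinAt f f' (Ici t) t) (hmax : IsLocalMaxOn f (Ici t) t) : f' ≤ 0 := by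
  have one_mem : (1 : ℝ) ∈ posTangentConeAt (Ici t) t := by
    rw [one_mem_posTangentConeAt_iff_mem_closure, inter_eq_left.mpr Ioi_subset_Ici_self,
      closure_Ioi]
    exact self_mem_Ici
  simpa using hmax.hasFDerivWithinAt_nonpos hf.hasFDerivWithinAt one_mem

theorem exists_forall_forall_le_of_isCompact {ι X α : Type*} [Finite ι] [Nonempty ι]
    [TopologicalSpace X] [LinearOrder α] [TopologicalSpace α] [ClosedIciTopology α]
    {s : Set X} (hs : IsCompact s) (hne : s.Nonempty) {f : ι → X → α}
    (hf : ∀ i, ContinuousOn (f i) s) : ∃ i, ∃ x ∈ s, ∀ j, ∀ y ∈ s, f j y ≤ f i x := by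
  choose x hx hmax using fun i ↦ hs.exists_isMaxOn hne (hf i)
  obtain ⟨i, hi⟩ := Finite.exists_max fun i ↦ f i (x i)
  exact ⟨i, x i, hx i, fun j y hy ↦ (hmax j hy).trans (hi j)⟩

section MaximumPrinciple

variable {ι : Type*} [Finite ι] {f f' : ι → ℝ → ℝ} {t₀ T C : ℝ}

theorem forall_le_of_right_deriv_pos_at_max (hf : ∀ i, ContinuousOn (f i) (Icc t₀ T))
    (hf' : ∀ i, ∀ t ∈ Ico t₀ T, HasDerivWithinAt (f i) (f' i t) (Ici t) t)
    (hpos : ∀ i, ∀ t ∈ Ico t₀ T, (∀ j, f j t ≤ f i t) → 0 < f' i t) (hC : ∀ i, f i T ≤ C) :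
    ∀ t ∈ Icc t₀ T, ∀ i, f i t ≤ C := by
  intro t ht i
  have : Nonempty ι := ⟨i⟩
  obtain ⟨k, τ, hτ, hmax⟩ := exists_forall_forall_le_of_isCompact isCompact_Icc ⟨t, ht⟩ hf
  have hτT : τ = T := by
    by_contra hne
    have hτ' : τ ∈ Ico t₀ T := ⟨hτ.1, hτ.2.lt_of_ne hne⟩
    have hlocal : IsLocalMaxOn (f k) (Ici τ) τ := by
      filter_upwards [Icc_mem_nhdsGE_of_mem hτ'] with s hs using hmax k s hs
    exact (hpos k τ hτ' fun j ↦ hmax j τ hτ).not_ge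
      (nonpos_of_hasDerivWithinAt_Ici_of_isLocalMaxOn (hf' k τ hτ') hlocal)
  calc f i t ≤ f k T := hτT ▸ hmax i t ht
    _ ≤ C := hC k

theorem forall_le_of_right_deriv_nonneg_at_max (hf : ∀ i, ContinuousOn (f i) (Icc t₀ T))
    (hf' : ∀ i, ∀ t ∈ Ico t₀ T, HasDerivWithinAt (f i) (f' i t) (Ici t) t)
    (hnonneg : ∀ i, ∀ t ∈ Ico t₀ T, (∀ j, f j t ≤ f i t) → 0 ≤ f' i t) (hC : ∀ i, f i T ≤ C) :
    ∀ t ∈ Icc t₀ T, ∀ i, f i t ≤ C := by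
  intro t ht i
  have perturbed_le (ε : ℝ) (hε : 0 < ε) : f i t + ε * (t - T) ≤ C := by
    refine forall_le_of_right_deriv_pos_at_max (f := fun j s ↦ f j s + ε * (s - T))
      (f' := fun j s ↦ f' j s + ε) (fun j ↦ (hf j).add (by fun_prop)) ?_ ?_ (by simpa using hC)
      t ht i
    · intro j s hs
      simpa using
        (hf' j s hs).fun_add (((hasDerivWithinAt_id s (Ici s)).sub_const T).const_mul ε)
    · intro j s hs hmax
      exact add_pos_of_nonneg_of_pos
        (hnonneg j s hs fun k ↦ le_of_add_le_add_right (hmax k)) hε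
  have perturbed_tendsto : Tendsto (fun ε ↦ f i t + ε * (t - T)) (𝓝[>] 0) (𝓝 (f i t)) :=
    tendsto_nhdsWithin_of_tendsto_nhds <| Continuous.tendsto' (by fun_prop) _ _ (by simp)
  exact le_of_tendsto perturbed_tendsto (eventually_mem_nhdsWithin.mono perturbed_le)

end MaximumPrinciple

section CooperativeSystem

variable {Λ : Type*} [Fintype Λ] {a : Λ → Λ → ℝ → ℝ} {z : ℝ → Λ → ℝ} {t₀ T C : ℝ}

theorem forall_le_of_cooperative_system
    (ha : Pairwise fun m m' ↦ ∀ t ∈ Ico t₀ T, 0 ≤ a m m' t)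
    (hzcont : ∀ m, ContinuousOn (fun s ↦ z s m) (Icc t₀ T))
    (hz : ∀ m, ∀ t ∈ Ico t₀ T, HasDerivWithinAt (fun s ↦ z s m)
      (-(∑ m', a m m' t * (z t m' - z t m))) (Ici t) t)
    (hC : ∀ m, z T m ≤ C) : ∀ t ∈ Icc t₀ T, ∀ m, z t m ≤ C := by
  refine forall_le_of_right_deriv_nonneg_at_max hzcont hz (fun m t ht hmax ↦ ?_) hC
  refine neg_nonneg.mpr (Finset.sum_nonpos fun m' _ ↦ ?_)
  rcases eq_or_ne m m' with rfl | hne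
  · simp
  · exact mul_nonpos_of_nonneg_of_nonpos (ha hne t ht) (sub_nonpos.mpr (hmax m'))

theorem hasDerivWithinAt_neg_of_linear_system {s : Set ℝ} {t : ℝ} {m : Λ}
    (hz : HasDerivWithinAt (fun s ↦ z s m) (-(∑ m', a m m' t * (z t m' - z t m))) s t) :
    HasDerivWithinAt (fun s ↦ -z s m) (-(∑ m', a m m' t * (-z t m' - -z t m))) s t := by
  refine hz.neg.congr_deriv ?_
  rw [← Finset.sum_neg_distrib]
  congr! 2 with m'
  ring

theorem statement16_general
    (ha : Pairwise fun m m' ↦ ∀ t ∈ Ico t₀ T, 0 ≤ a m m' t)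
    (hzcont : ∀ m, ContinuousOn (fun s ↦ z s m) (Icc t₀ T))
    (hz : ∀ m, ∀ t ∈ Ico t₀ T, HasDerivWithinAt (fun s ↦ z s m)
      (-(∑ m', a m m' t * (z t m' - z t m))) (Ici t) t) :
    (∀ t ∈ Icc t₀ T, ∀ m, |z t m| ≤ ‖z T‖) ∧
      ((∀ m, z T m ≤ 0) → ∀ t ∈ Icc t₀ T, ∀ m, z t m ≤ 0) := by
  have upper : ∀ t ∈ Icc t₀ T, ∀ m, z t m ≤ ‖z T‖ :=
    forall_le_of_cooperative_system ha hzcont hz fun m ↦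
      (le_abs_self _).trans (norm_le_pi_norm (z T) m)
  have lower : ∀ t ∈ Icc t₀ T, ∀ m, -z t m ≤ ‖z T‖ :=
    forall_le_of_cooperative_system (z := fun s m ↦ -z s m) ha (fun m ↦ (hzcont m).neg)
      (fun m t ht ↦ hasDerivWithinAt_neg_of_linear_system (hz m t ht)) fun m ↦
      (neg_le_abs _).trans (norm_le_pi_norm (z T) m)
  exact ⟨fun t ht m ↦ abs_le'.mpr ⟨upper t ht m, lower t ht m⟩,
    forall_le_of_cooperative_system ha hzcont hz⟩

end CooperativeSystem

/-- contraction property of linear cooperative ODE systems. If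
`-dz_m/dt = Σ_{m'} a_{mm'}(t)(z_{m'}(t) - z_m(t))` on `[0,T]` with continuous nonnegative
coefficients, then `max_m |z_m(t)| ≤ max_m |z_m(T)|` for all `t ∈ [0,T]`, and if
`z(T) ≤ 0` then `z(t) ≤ 0` on `[0,T]`. -/
theorem statement16 {Λ : Type*} [Fintype Λ] [Nonempty Λ]
    (T : ℝ) (hT : 0 < T)
    (a : Λ → Λ → ℝ → ℝ)
    (hacont : ∀ m m', ContinuousOn (a m m') (Set.Icc 0 T))
    (hanonneg : ∀ m m', ∀ t ∈ Set.Icc (0:ℝ) T, 0 ≤ a m m' t)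
    (z : ℝ → Λ → ℝ)
    (hz : ∀ m, ∀ t ∈ Set.Icc (0:ℝ) T, HasDerivWithinAt (fun s => z s m)
      (-(∑ m', a m m' t * (z t m' - z t m))) (Set.Icc 0 T) t) :
    (∀ t ∈ Set.Icc (0:ℝ) T, ∀ m, |z t m| ≤ ‖z T‖) ∧
    ((∀ m, z T m ≤ 0) → ∀ t ∈ Set.Icc (0:ℝ) T, ∀ m, z t m ≤ 0) := by
  exact statement16_general (fun m m' _ t ht ↦ hanonneg m m' t (Ico_subset_Icc_self ht))
    (fun m t ht ↦ (hz m t ht).continuousWithinAt) fun m t ht ↦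
    (hz m t (Ico_subset_Icc_self ht)).mono_of_mem_nhdsWithin (Icc_mem_nhdsGE_of_mem ht)
end

section
/- Comparison inequality for perturbed cooperative ODE systems: let g : [0,T] → ℝ^Λ be continuous and let z : [0,T] → ℝ^Λ be C¹ and satisfy, for every m ∈ Λ and s ∈ [0,T], −dz_m/dt(s) ≤ Σ_{m'∈Λ} a_{mm'}(s)·(z_{m'}(s) − z_m(s)) + g_m(s). Then for every m ∈ Λ and every t ∈ [0,T]: z_m(t) ≤ max_{m'∈Λ} |z_{m'}(T)| + ∫_t^T max_{m'∈Λ} |g_{m'}(s)| ds. -/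
open scoped BigOperators

/-!
The upper envelope `M s = max_m z_m(s)` has a right derivative, equal to `z_m'(s)` for some `m`
attaining the maximum. At such an `m` every difference `z_{m'}(s) - z_m(s)` is nonpositive, so the
coupling term drops out of the differential inequality and `M' ≥ -max_m |g_m|`. Integrating from
`t` to `T` bounds `M t` by `M T + ∫ max_m |g_m|`.
-/

open Set MeasureTheory

theorem hasDerivWithinAt_max_of_lt {f g : ℝ → ℝ} {g' x : ℝ} {s : Set ℝ}
    (hf : ContinuousWithinAt f s x) (hg : HasDerivWithinAt g g' s x) (hlt : f x < g x) :
    HasDerivWithinAt (fun y => max (f y) (g y)) g' s x :=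
  hg.congr_of_eventuallyEq
    ((hf.eventually_lt hg.continuousWithinAt hlt).mono fun _ hy => max_eq_right hy.le)
    (max_eq_right hlt.le)

theorem hasDerivWithinAt_Ioi_max_of_eq {f g : ℝ → ℝ} {f' g' x : ℝ}
    (hf : HasDerivWithinAt f f' (Ioi x) x) (hg : HasDerivWithinAt g g' (Ioi x) x)
    (heq : f x = g x) :
    HasDerivWithinAt (fun y => max (f y) (g y)) (max f' g') (Ioi x) x := by
  rw [hasDerivWithinAt_iff_tendsto_slope' self_notMem_Ioi] at hf hg ⊢
  refine (hf.max hg).congr' ?_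
  filter_upwards [self_mem_nhdsWithin] with y hy
  have hxy : 0 ≤ y - x := sub_nonneg.2 (le_of_lt hy)
  simp only [slope_def_field, heq, max_self, max_div_div_right hxy, max_sub_sub_right]

theorem exists_hasDerivWithinAt_Ioi_max {f g : ℝ → ℝ} {f' g' x : ℝ}
    (hf : HasDerivWithinAt f f' (Ioi x) x) (hg : HasDerivWithinAt g g' (Ioi x) x) :
    (g x ≤ f x ∧ HasDerivWithinAt (fun y => max (f y) (g y)) f' (Ioi x) x) ∨
      (f x ≤ g x ∧ HasDerivWithinAt (fun y => max (f y) (g y)) g' (Ioi x) x) := by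
  rcases lt_trichotomy (f x) (g x) with hlt | heq | hgt
  · exact .inr ⟨hlt.le, hasDerivWithinAt_max_of_lt hf.continuousWithinAt hg hlt⟩
  · have hmax := hasDerivWithinAt_Ioi_max_of_eq hf hg heq
    rcases max_choice f' g' with h | h <;> rw [h] at hmax
    · exact .inl ⟨heq.ge, hmax⟩
    · exact .inr ⟨heq.le, hmax⟩
  · simp only [max_comm (f _)]
    exact .inl ⟨hgt.le, hasDerivWithinAt_max_of_lt hg.continuousWithinAt hf hgt⟩

theorem exists_hasDerivWithinAt_Ioi_sup' {ι : Type*} {s : Finset ι} (hs : s.Nonempty)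
    {f : ι → ℝ → ℝ} {f' : ι → ℝ} {x : ℝ}
    (hf : ∀ i ∈ s, HasDerivWithinAt (f i) (f' i) (Ioi x) x) :
    ∃ i ∈ s, IsMaxOn (f · x) s i ∧
      HasDerivWithinAt (fun y => s.sup' hs (f · y)) (f' i) (Ioi x) x := by
  induction hs using Finset.Nonempty.cons_induction with
  | singleton i => exact ⟨i, by simp, by simp [isMaxOn_iff], by simpa using hf i (by simp)⟩
  | cons i s hi hs ih =>
    simp only [Finset.forall_mem_cons] at hf
    obtain ⟨j, hj, hjmax, hderiv⟩ := ih hf.2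
    have hsup : s.sup' hs (f · x) = f j x :=
      le_antisymm (Finset.sup'_le _ _ hjmax) (Finset.le_sup' (f · x) hj)
    simp only [Finset.sup'_cons hs, isMaxOn_iff, SetLike.mem_coe, Finset.forall_mem_cons]
    rcases exists_hasDerivWithinAt_Ioi_max hf.1 hderiv with ⟨hle, hmax⟩ | ⟨hle, hmax⟩ <;>
      rw [hsup] at hle
    · exact ⟨i, Finset.mem_cons_self i s, ⟨le_rfl, fun k hk => (hjmax hk).trans hle⟩, hmax⟩
    · exact ⟨j, Finset.mem_cons_of_mem hj, ⟨hle, fun k hk => hjmax hk⟩, hmax⟩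

theorem integral_le_sup'_sub_sup'_of_le_deriv_right {ι : Type*} {s : Finset ι} (hs : s.Nonempty)
    {f f' : ι → ℝ → ℝ} {φ : ℝ → ℝ} {a b : ℝ} (hab : a ≤ b)
    (hcont : ∀ i ∈ s, ContinuousOn (f i) (Icc a b))
    (hderiv : ∀ i ∈ s, ∀ x ∈ Ioo a b, HasDerivWithinAt (f i) (f' i x) (Ioi x) x)
    (hφ : IntegrableOn φ (Icc a b))
    (hle : ∀ x ∈ Ioo a b, ∀ i ∈ s, IsMaxOn (f · x) s i → φ x ≤ f' i x) :
    ∫ x in a..b, φ x ≤ s.sup' hs (f · b) - s.sup' hs (f · a) := by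
  have hsup : ∀ x ∈ Ioo a b, ∃ d, φ x ≤ d ∧
      HasDerivWithinAt (fun y => s.sup' hs (f · y)) d (Ioi x) x := fun x hx =>
    let ⟨i, hi, himax, hd⟩ := exists_hasDerivWithinAt_Ioi_sup' hs fun i hi => hderiv i hi x hx
    ⟨f' i x, hle x hx i hi himax, hd⟩
  choose! d hφd hd using hsup
  exact intervalIntegral.integral_le_sub_of_hasDeriv_right_of_le hab
    (ContinuousOn.finset_sup'_apply hs hcont) hd hφ hφd

theorem sum_mul_sub_nonpos_of_forall_le {Λ : Type*} [Fintype Λ] {c x : Λ → ℝ} {m : Λ}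
    (hc : ∀ m', m ≠ m' → 0 ≤ c m') (hx : ∀ m', x m' ≤ x m) :
    ∑ m', c m' * (x m' - x m) ≤ 0 := by
  refine Finset.sum_nonpos fun m' _ => ?_
  rcases eq_or_ne m m' with rfl | hne
  · simp
  · exact mul_nonpos_of_nonneg_of_nonpos (hc m' hne) (sub_nonpos.2 (hx m'))

theorem le_norm_apply {Λ : Type*} [Fintype Λ] (x : Λ → ℝ) (m : Λ) : x m ≤ ‖x‖ :=
  (Real.le_norm_self _).trans (norm_le_pi_norm x m)

theorem statement17_general {Λ : Type*} [Fintype Λ] {t₀ T : ℝ} {a : Λ → Λ → ℝ → ℝ}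
    (hanonneg : ∀ m m', m ≠ m' → ∀ s ∈ Ioo t₀ T, 0 ≤ a m m' s)
    {g : ℝ → Λ → ℝ} (hg : IntegrableOn (fun s => ‖g s‖) (Icc t₀ T))
    {z z' : ℝ → Λ → ℝ} (hzcont : ∀ m, ContinuousOn (fun s => z s m) (Icc t₀ T))
    (hz : ∀ m, ∀ s ∈ Ioo t₀ T, HasDerivWithinAt (fun r => z r m) (z' s m) (Ioi s) s)
    (hineq : ∀ m, ∀ s ∈ Ioo t₀ T,
      -(z' s m) ≤ (∑ m', a m m' s * (z s m' - z s m)) + g s m) :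
    ∀ m, ∀ t ∈ Icc t₀ T, z t m ≤ ‖z T‖ + ∫ s in t..T, ‖g s‖ := by
  intro m t ht
  have hne : (Finset.univ : Finset Λ).Nonempty := ⟨m, Finset.mem_univ m⟩
  have hIcc : Icc t T ⊆ Icc t₀ T := Icc_subset_Icc_left ht.1
  have hIoo : Ioo t T ⊆ Ioo t₀ T := Ioo_subset_Ioo_left ht.1
  have hderiv_ge : ∀ s ∈ Ioo t T, ∀ k ∈ Finset.univ,
      IsMaxOn (z s ·) (Finset.univ : Finset Λ) k → -‖g s‖ ≤ z' s k := fun s hs k _ hk => by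
    have hcoupling : ∑ m', a k m' s * (z s m' - z s k) ≤ 0 :=
      sum_mul_sub_nonpos_of_forall_le (fun m' hm' => hanonneg k m' hm' s (hIoo hs))
        fun m' => hk (Finset.mem_coe.2 (Finset.mem_univ m'))
    linarith [hineq k s (hIoo hs), le_norm_apply (g s) k]
  have hgrowth := integral_le_sup'_sub_sup'_of_le_deriv_right hne ht.2
    (fun k _ => (hzcont k).mono hIcc) (fun k _ s hs => hz k s (hIoo hs))
    (hg.mono_set hIcc).neg hderiv_ge
  simp only [Pi.neg_apply, intervalIntegral.integral_neg] at hgrowth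
  have hstart : z t m ≤ Finset.univ.sup' hne (z t ·) := Finset.le_sup' (z t) (Finset.mem_univ m)
  have hend : Finset.univ.sup' hne (z T ·) ≤ ‖z T‖ :=
    Finset.sup'_le _ _ fun k _ => le_norm_apply (z T) k
  linarith

/-- comparison inequality for perturbed cooperative ODE systems. If `z` is
C¹ with `-dz_m/dt(s) ≤ Σ_{m'} a_{mm'}(s)(z_{m'}(s) - z_m(s)) + g_m(s)` on `[0,T]`, the
coefficients `a_{mm'} ≥ 0` being continuous and `g` continuous, then
`z_m(t) ≤ max_{m'} |z_{m'}(T)| + ∫_t^T max_{m'} |g_{m'}(s)| ds`. -/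
theorem statement17 {Λ : Type*} [Fintype Λ] [Nonempty Λ]
    (T : ℝ) (hT : 0 < T)
    (a : Λ → Λ → ℝ → ℝ)
    (hacont : ∀ m m', ContinuousOn (a m m') (Set.Icc 0 T))
    (hanonneg : ∀ m m', ∀ t ∈ Set.Icc (0:ℝ) T, 0 ≤ a m m' t)
    (g : ℝ → Λ → ℝ)
    (hg : ∀ m, ContinuousOn (fun s => g s m) (Set.Icc 0 T))
    (z z' : ℝ → Λ → ℝ)
    (hz'cont : ∀ m, ContinuousOn (fun s => z' s m) (Set.Icc 0 T))
    (hz : ∀ m, ∀ t ∈ Set.Icc (0:ℝ) T, HasDerivWithinAt (fun s => z s m)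
      (z' t m) (Set.Icc 0 T) t)
    (hineq : ∀ m, ∀ s ∈ Set.Icc (0:ℝ) T,
      -(z' s m) ≤ (∑ m', a m m' s * (z s m' - z s m)) + g s m) :
    ∀ m, ∀ t ∈ Set.Icc (0:ℝ) T, z t m ≤ ‖z T‖ + ∫ s in t..T, ‖g s‖ := by
  have hg_int : IntegrableOn (fun s => ‖g s‖) (Icc 0 T) :=
    (continuousOn_pi.2 hg).norm.integrableOn_Icc
  exact statement17_general (fun m m' _ s hs => hanonneg m m' s (Ioo_subset_Icc_self hs)) hg_int
    (fun m s hs => (hz m s hs).continuousWithinAt)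
    (fun m s hs => ((hz m s (Ioo_subset_Icc_self hs)).hasDerivAt
      (Icc_mem_nhds hs.1 hs.2)).hasDerivWithinAt)
    (fun m s hs => hineq m s (Ioo_subset_Icc_self hs))
end

section
/- Scalar Riccati-type comparison: let C > 0, let N ≥ 1 be an integer, let T > 0, and let v : [0,T] → ℝ be differentiable with −dv/ds(s) = C·v(s) + C·N·v(s)² + C/N for all s ∈ [0,T] and v(T) ≤ C/N. Set T* := 1/(2C + 4C² + 1), which does not depend on N. If T ≤ T*, then v(s) ≤ 2C/N for all s ∈ [0,T]. -/
/-!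
Run backwards from `T`, the solution starts at most at `C / N` and rises at speed at most `g v`,
where `g y = C y + C N y² + C / N`. As `g` is increasing on the nonnegative half-line, the speed
while `v` is between `C / N` and `2 C / N` is below `g (2 C / N) = (C / N) (2 C + 4 C² + 1)`.
Climbing the distance `C / N` from one level to the other thus takes time at least
`1 / (2 C + 4 C² + 1)`: distance and speed both scale as `1 / N`, and `N` cancels.
-/

open Set

theorem hasDerivWithinAt_comp_neg {𝕜 F : Type*} [NontriviallyNormedField 𝕜]
    [NormedAddCommGroup F] [NormedSpace 𝕜 F] {f : 𝕜 → F} {f' : F} {s : Set 𝕜} {x : 𝕜}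
    (hf : HasDerivWithinAt f f' s (-x)) :
    HasDerivWithinAt (fun y => f (-y)) (-f') (Neg.neg ⁻¹' s) x := by
  simpa only [neg_smul, one_smul, Function.comp_def] using
    hf.scomp x (hasDerivAt_neg x).hasDerivWithinAt (mapsTo_preimage Neg.neg s)

section BackwardComparison

variable {f f' : ℝ → ℝ} {t₀ t₁ : ℝ}

theorem image_le_of_deriv_boundary_lt_deriv_left {B B' : ℝ → ℝ}
    (hf : ContinuousOn f (Icc t₀ t₁))
    (hf' : ∀ s ∈ Ioc t₀ t₁, HasDerivWithinAt f (f' s) (Iic s) s)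
    (hend : f t₁ ≤ B t₁) (hB : ContinuousOn B (Icc t₀ t₁))
    (hB' : ∀ s ∈ Ioc t₀ t₁, HasDerivWithinAt B (B' s) (Iic s) s)
    (bound : ∀ s ∈ Ioc t₀ t₁, f s = B s → B' s < f' s) :
    ∀ s ∈ Icc t₀ t₁, f s ≤ B s := by
  have mapsTo_Icc : MapsTo Neg.neg (Icc (-t₁) (-t₀)) (Icc t₀ t₁) := fun x hx =>
    ⟨le_neg_of_le_neg hx.2, neg_le_of_neg_le hx.1⟩
  have mapsTo_Ioc : MapsTo Neg.neg (Ico (-t₁) (-t₀)) (Ioc t₀ t₁) := fun x hx =>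
    ⟨lt_neg_of_lt_neg hx.2, neg_le_of_neg_le hx.1⟩
  have reflected_deriv {h h' : ℝ → ℝ}
      (hh : ∀ s ∈ Ioc t₀ t₁, HasDerivWithinAt h (h' s) (Iic s) s) :
      ∀ x ∈ Ico (-t₁) (-t₀), HasDerivWithinAt (fun y => h (-y)) (-h' (-x)) (Ici x) x :=
    fun x hx => (hasDerivWithinAt_comp_neg (hh _ (mapsTo_Ioc hx))).mono fun _ hy =>
      neg_le_neg (mem_Ici.1 hy)
  have reflected_le : ∀ ⦃x⦄, x ∈ Icc (-t₁) (-t₀) → f (-x) ≤ B (-x) :=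
    image_le_of_deriv_right_lt_deriv_boundary'
      (hf.comp continuousOn_neg mapsTo_Icc) (reflected_deriv hf')
      (by simpa only [Function.comp_def, neg_neg] using hend)
      (hB.comp continuousOn_neg mapsTo_Icc) (reflected_deriv hB')
      fun x hx heq => neg_lt_neg (bound _ (mapsTo_Ioc hx) heq)
  intro s hs
  simpa only [neg_neg] using reflected_le ⟨neg_le_neg hs.2, neg_le_neg hs.1⟩

theorem le_of_neg_deriv_le_comp_of_lt_of_mul_le {g : ℝ → ℝ} {a b M : ℝ}
    (hf : ContinuousOn f (Icc t₀ t₁))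
    (hf' : ∀ s ∈ Ioc t₀ t₁, HasDerivWithinAt f (f' s) (Iic s) s)
    (hfg : ∀ s ∈ Ioc t₀ t₁, -f' s ≤ g (f s)) (hend : f t₁ ≤ a)
    (hM : 0 < M) (hg : ∀ y ∈ Ico a b, g y < M) (htime : M * (t₁ - t₀) ≤ b - a) :
    ∀ s ∈ Icc t₀ t₁, f s ≤ b := by
  have le_barrier : ∀ s ∈ Icc t₀ t₁, f s ≤ a + M * (t₁ - s) := by
    refine image_le_of_deriv_boundary_lt_deriv_left (B' := fun _ => -M) hf hf'
      (by simpa only [sub_self, mul_zero, add_zero] using hend) (by fun_prop) (fun s _ => ?_)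
      fun s hs heq => ?_
    · simpa only [mul_neg_one, id_eq] using
        ((((hasDerivAt_id s).const_sub t₁).const_mul M).const_add a).hasDerivWithinAt
    · have le_left : a ≤ f s := by
        rw [heq]
        exact le_add_of_nonneg_right (mul_nonneg hM.le (sub_nonneg.2 hs.2))
      have lt_right : f s < b := by
        have : M * (t₁ - s) < M * (t₁ - t₀) := by gcongr; exact hs.1
        linarith
      linarith [hfg s hs, hg (f s) ⟨le_left, lt_right⟩]
  intro s hs
  calc
    f s ≤ a + M * (t₁ - s) := le_barrier s hs
    _ ≤ a + M * (t₁ - t₀) := by gcongr; exact hs.1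
    _ ≤ b := by linarith

theorem le_of_neg_deriv_le_quadratic {α β γ a b : ℝ}
    (hf : ContinuousOn f (Icc t₀ t₁))
    (hf' : ∀ s ∈ Ioc t₀ t₁, HasDerivWithinAt f (f' s) (Iic s) s)
    (hα : 0 < α) (hβ : 0 ≤ β) (hγ : 0 ≤ γ) (ha : 0 ≤ a) (hb : 0 < b)
    (hquad : ∀ s ∈ Ioc t₀ t₁, -f' s ≤ α * f s + β * f s ^ 2 + γ) (hend : f t₁ ≤ a)
    (htime : (α * b + β * b ^ 2 + γ) * (t₁ - t₀) ≤ b - a) :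
    ∀ s ∈ Icc t₀ t₁, f s ≤ b := by
  refine le_of_neg_deriv_le_comp_of_lt_of_mul_le (g := fun y => α * y + β * y ^ 2 + γ)
    hf hf' hquad hend (by positivity) (fun y hy => ?_) htime
  have hy₀ : 0 ≤ y := ha.trans hy.1
  have linear_lt : α * y < α * b := mul_lt_mul_of_pos_left hy.2 hα
  have square_le : β * y ^ 2 ≤ β * b ^ 2 := by gcongr; exact hy.2.le
  linarith

end BackwardComparison

theorem statement18_general {C N T : ℝ} (hC : 0 < C) (hN : 0 < N) {v v' : ℝ → ℝ}
    (hv : ∀ s ∈ Icc 0 T, HasDerivWithinAt v (v' s) (Icc 0 T) s)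
    (hv' : ∀ s ∈ Icc 0 T, -v' s ≤ C * v s + C * N * v s ^ 2 + C / N)
    (hvT : v T ≤ C / N) (hT : T ≤ 1 / (2 * C + 4 * C ^ 2 + 1)) :
    ∀ s ∈ Icc 0 T, v s ≤ 2 * C / N := by
  have left_deriv : ∀ s ∈ Ioc 0 T, HasDerivWithinAt v (v' s) (Iic s) s := fun s hs =>
    ((hv s (Ioc_subset_Icc_self hs)).mono (Icc_subset_Icc_right hs.2)).mono_of_mem_nhdsWithin
      (Icc_mem_nhdsLE hs.1)
  have speed_mul_time_le :
      (C * (2 * C / N) + C * N * (2 * C / N) ^ 2 + C / N) * (T - 0) ≤ 2 * C / N - C / N := by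
    calc
      _ = C / N * (T * (2 * C + 4 * C ^ 2 + 1)) := by field_simp; ring
      _ ≤ C / N * 1 := by gcongr; exact (le_div_iff₀ (by positivity)).1 hT
      _ = 2 * C / N - C / N := by ring
  exact le_of_neg_deriv_le_quadratic (fun s hs => (hv s hs).continuousWithinAt) left_deriv
    hC (by positivity) (by positivity) (by positivity) (by positivity)
    (fun s hs => hv' s (Ioc_subset_Icc_self hs)) hvT speed_mul_time_le

/-- scalar Riccati-type comparison. If `v` solves the backward ODE
`-dv/ds = C v + C N v² + C/N` on `[0,T]` with `v(T) ≤ C/N`, and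
`T ≤ T* := 1/(2C + 4C² + 1)` (independent of `N`), then `v(s) ≤ 2C/N` on `[0,T]`. -/
theorem statement18 (C : ℝ) (hC : 0 < C) (N : ℕ) (hN : 1 ≤ N)
    (T : ℝ) (hT : 0 < T) (v : ℝ → ℝ)
    (hv : ∀ s ∈ Set.Icc (0:ℝ) T, HasDerivWithinAt v
      (-(C * v s + C * N * (v s) ^ 2 + C / N)) (Set.Icc 0 T) s)
    (hvT : v T ≤ C / N)
    (hTstar : T ≤ 1 / (2 * C + 4 * C ^ 2 + 1)) :
    ∀ s ∈ Set.Icc (0:ℝ) T, v s ≤ 2 * C / N :=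
  statement18_general hC (Nat.cast_pos.2 hN) hv (fun _ _ => (neg_neg _).le) hvT hTstar
end
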